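/- arXiv:2011.07606 — 2 statements merged into one kernel-verified Lean document; each statement's English description precedes it below -/
import Mathlib

section
/- Let a_e > b_e > 0, let f = √(a_e² − b_e²) > 0, and let (X, Y) ∈ ℝ² with X > 0, Y > 0 and X²/a_e² + Y²/b_e² = 1. Set T = X² + Y² + f², Δ = T² − 4X²f², and A = (T − √Δ)/2. Then A = f²·X²/a_e², and consequently a_e·√A/f = X and (b_e/f)·√(f² − A) = Y; that is, for a point lying on the ellipse, the confocal-hyperbola intersection point (X_I, Y_I) coincides with the point itself and the confocal hyperbola distance vanishes. -/
/-- Let `a_e > b_e > 0`, `f = √(a_e² − b_e²) > 0`, and `(X, Y)` with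
`X > 0`, `Y > 0`, and `X²/a_e² + Y²/b_e² = 1`. Set `T = X² + Y² + f²`,
`Δ = T² − 4X²f²`, `A = (T − √Δ)/2`. Then `A = f²·X²/a_e²`, `a_e·√A/f = X`, and
`(b_e/f)·√(f² − A) = Y`; i.e. for a point on the ellipse the confocal-hyperbola
intersection point coincides with the point itself and the distance vanishes. -/
theorem on_ellipse_intersection_is_self (ae be f X Y T Δ A : ℝ)
    (hab : be < ae) (hb : 0 < be)
    (hf : f = Real.sqrt (ae ^ 2 - be ^ 2)) (hfpos : 0 < f)
    (hX : 0 < X) (hY : 0 < Y)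
    (hellipse : X ^ 2 / ae ^ 2 + Y ^ 2 / be ^ 2 = 1)
    (hT : T = X ^ 2 + Y ^ 2 + f ^ 2) (hΔ : Δ = T ^ 2 - 4 * X ^ 2 * f ^ 2)
    (hA : A = (T - Real.sqrt Δ) / 2) :
    A = f ^ 2 * X ^ 2 / ae ^ 2 ∧
    ae * Real.sqrt A / f = X ∧
    (be / f) * Real.sqrt (f ^ 2 - A) = Y := by
  have ha : 0 < ae := hb.trans hab
  have hf2 : f ^ 2 = ae ^ 2 - be ^ 2 := by
    rw [hf, Real.sq_sqrt]
    nlinarith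
  obtain ⟨u, hu⟩ : ∃ u, u = X / ae := ⟨_, rfl⟩
  obtain ⟨v, hv⟩ : ∃ v, v = Y / be := ⟨_, rfl⟩
  have hu0 : 0 < u := hu ▸ div_pos hX ha
  have hv0 : 0 < v := hv ▸ div_pos hY hb
  have hXu : X = ae * u := by rw [hu]; field_simp
  have hYv : Y = be * v := by rw [hv]; field_simp
  have huv : u ^ 2 + v ^ 2 = 1 := by
    rw [hu, hv, div_pow, div_pow]; exact hellipse
  have hv2 : v ^ 2 = 1 - u ^ 2 := by linarith
  have hTu : T = ae ^ 2 + f ^ 2 * u ^ 2 := by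
    rw [hT, hXu, hYv, mul_pow, mul_pow, hv2, hf2]; ring
  have hD : Δ = (ae ^ 2 - f ^ 2 * u ^ 2) ^ 2 := by
    rw [hΔ, hTu, hXu]; ring
  have hnn : 0 ≤ ae ^ 2 - f ^ 2 * u ^ 2 := by
    have h1 : f ^ 2 * u ^ 2 ≤ f ^ 2 * 1 :=
      mul_le_mul_of_nonneg_left (by nlinarith) (sq_nonneg f)
    nlinarith
  have hAu : A = (f * u) ^ 2 := by
    rw [hA, hD, Real.sqrt_sq hnn, hTu]; ring
  have hAv : f ^ 2 - A = (f * v) ^ 2 := by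
    rw [hAu, mul_pow, mul_pow, hv2]; ring
  refine ⟨?_, ?_, ?_⟩
  · rw [hAu, hXu]; field_simp
  · rw [hAu, Real.sqrt_sq (by positivity), hXu]; field_simp
  · rw [hAv, Real.sqrt_sq (by positivity), hYv]; field_simp
end

section
/- Let a, b > 0, θ ∈ ℝ, and (x_c, y_c) ∈ ℝ², and define d(x, y) = (((x − x_c)cos θ + (y − y_c)sin θ)/a)² + ((−(x − x_c)sin θ + (y − y_c)cos θ)/b)² − 1. Then the gradient ∇d vanishes at (x_c, y_c) and at no other point, and the Sampson distance |d(x, y)| / ‖∇d(x, y)‖ tends to +∞ as (x, y) tends to (x_c, y_c) through points (x, y) ≠ (x_c, y_c). -/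
/-- Let `a, b > 0`, `θ ∈ ℝ`, `(x_c, y_c) ∈ ℝ²`, and let
`d(x, y) = (((x − x_c)cos θ + (y − y_c)sin θ)/a)² + ((−(x − x_c)sin θ + (y − y_c)cos θ)/b)² − 1`.
Then the gradient `∇d` vanishes at `(x_c, y_c)` and at no other point, and the
Sampson distance `|d| / ‖∇d‖` tends to `+∞` as the point tends to `(x_c, y_c)`
through points different from the center. -/
theorem sampson_distance_blows_up_at_center (a b θ xc yc : ℝ)
    (ha : 0 < a) (hb : 0 < b)
    (d : EuclideanSpace ℝ (Fin 2) → ℝ)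
    (hd : ∀ p : EuclideanSpace ℝ (Fin 2),
      d p = (((p 0 - xc) * Real.cos θ + (p 1 - yc) * Real.sin θ) / a) ^ 2 +
        ((-(p 0 - xc) * Real.sin θ + (p 1 - yc) * Real.cos θ) / b) ^ 2 - 1)
    (c : EuclideanSpace ℝ (Fin 2)) (hc0 : c 0 = xc) (hc1 : c 1 = yc) :
    gradient d c = 0 ∧
    (∀ p : EuclideanSpace ℝ (Fin 2), gradient d p = 0 → p = c) ∧
    Filter.Tendsto (fun p : EuclideanSpace ℝ (Fin 2) => |d p| / ‖gradient d p‖)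
      (nhdsWithin c {p | p ≠ c}) Filter.atTop := by
  have hG : ∀ p, HasGradientAt d (!₂[2 * (((p 0 - xc) * Real.cos θ + (p 1 - yc) * Real.sin θ) / a ^ 2) * Real.cos θ
        - 2 * ((-(p 0 - xc) * Real.sin θ + (p 1 - yc) * Real.cos θ) / b ^ 2) * Real.sin θ,
      2 * (((p 0 - xc) * Real.cos θ + (p 1 - yc) * Real.sin θ) / a ^ 2) * Real.sin θ
        + 2 * ((-(p 0 - xc) * Real.sin θ + (p 1 - yc) * Real.cos θ) / b ^ 2) * Real.cos θ] :
        EuclideanSpace ℝ (Fin 2)) p := by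
    intro p
    rw [hasGradientAt_iff_hasFDerivAt]
    have h0 : HasFDerivAt (fun q : EuclideanSpace ℝ (Fin 2) => q 0 - xc)
        (EuclideanSpace.proj 0 : EuclideanSpace ℝ (Fin 2) →L[ℝ] ℝ) p :=
      (EuclideanSpace.proj 0 : EuclideanSpace ℝ (Fin 2) →L[ℝ] ℝ).hasFDerivAt.sub_const xc
    have h1 : HasFDerivAt (fun q : EuclideanSpace ℝ (Fin 2) => q 1 - yc)
        (EuclideanSpace.proj 1 : EuclideanSpace ℝ (Fin 2) →L[ℝ] ℝ) p :=
      (EuclideanSpace.proj 1 : EuclideanSpace ℝ (Fin 2) →L[ℝ] ℝ).hasFDerivAt.sub_const yc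
    have hu := (((h0.mul_const (Real.cos θ)).add (h1.mul_const (Real.sin θ))).mul_const a⁻¹).pow 2
    have hv := (((h0.neg.mul_const (Real.sin θ)).add (h1.mul_const (Real.cos θ))).mul_const b⁻¹).pow 2
    have h := (hu.add hv).sub_const 1
    have hfun : d = _ := funext hd
    rw [hfun]
    refine HasFDerivAt.congr_fderiv (h.congr_of_eventuallyEq (Filter.Eventually.of_forall fun q => ?_)) ?_
    · simp [div_eq_mul_inv]
    · ext q
      simp [PiLp.inner_apply, Fin.sum_univ_two]
      field_simp
      ring
  have hg : ∀ p, gradient d p = _ := fun p => (hG p).gradient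
  have hc : gradient d c = 0 := by
    rw [hg]
    ext i
    fin_cases i <;> simp [hc0, hc1]
  have huniq : ∀ p : EuclideanSpace ℝ (Fin 2), gradient d p = 0 → p = c := by
    intro p hp
    rw [hg] at hp
    have e0 := congrArg (fun q : EuclideanSpace ℝ (Fin 2) => q 0) hp
    have e1 := congrArg (fun q : EuclideanSpace ℝ (Fin 2) => q 1) hp
    have hcs := Real.sin_sq_add_cos_sq θ
    simp only [Matrix.cons_val_zero, Matrix.cons_val_one, PiLp.zero_apply] at e0 e1
    set S := Real.sin θ
    set C := Real.cos θ
    have hu : ((p 0 - xc) * C + (p 1 - yc) * S) / a ^ 2 = 0 := by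
      linear_combination (C * e0 + S * e1) / 2 - (((p 0 - xc) * C + (p 1 - yc) * S) / a ^ 2) * hcs
    have hv : (-(p 0 - xc) * S + (p 1 - yc) * C) / b ^ 2 = 0 := by
      linear_combination (-S * e0 + C * e1) / 2 - ((-(p 0 - xc) * S + (p 1 - yc) * C) / b ^ 2) * hcs
    have hu2 := (div_eq_zero_iff.1 hu).resolve_right (by positivity)
    have hv2 := (div_eq_zero_iff.1 hv).resolve_right (by positivity)
    ext i
    fin_cases i
    · simp only [Fin.zero_eta, hc0]
      linear_combination C * hu2 - S * hv2 - (p 0 - xc) * hcs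
    · simp only [Fin.mk_one, hc1]
      linear_combination S * hu2 + C * hv2 - (p 1 - yc) * hcs
  refine ⟨hc, huniq, ?_⟩
  have hdc : ContinuousAt d c := (hG c).differentiableAt.continuousAt
  have hgc : Continuous (gradient d) := by
    have : gradient d = _ := funext hg
    rw [this]
    refine (PiLp.continuous_toLp 2 _).comp (continuous_pi fun i => ?_)
    fin_cases i <;> simp <;> fun_prop
  have hd1 : Filter.Tendsto (fun p => |d p|) (nhdsWithin c {p | p ≠ c}) (nhds 1) := by
    have h := hdc.abs.tendsto.mono_left (nhdsWithin_le_nhds (s := {p | p ≠ c}))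
    have h2 : |d c| = 1 := by rw [hd]; simp [hc0, hc1]
    rwa [h2] at h
  have hn : Filter.Tendsto (fun p => ‖gradient d p‖) (nhdsWithin c {p | p ≠ c})
      (nhdsWithin 0 (Set.Ioi 0)) := by
    refine tendsto_nhdsWithin_iff.2 ⟨?_, ?_⟩
    · have h := (hgc.norm.tendsto c).mono_left (nhdsWithin_le_nhds (s := {p | p ≠ c}))
      rwa [hc, norm_zero] at h
    · filter_upwards [self_mem_nhdsWithin] with p hp
      exact norm_pos_iff.2 fun h => hp (huniq p h)
  simp only [div_eq_mul_inv]
  exact hd1.pos_mul_atTop one_pos (tendsto_inv_nhdsGT_zero.comp hn)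
end
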